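/- For the linear Fokker–Planck operator L f = Δ_v f + (1/4)(2d − |v|²) f on L²_v(ℝ^d), there exists a constant λ > 0 such that −⟨L f, f⟩ ≥ λ |{I − P} f|²_μ + |b^f|² for all suitable f, where b^f = ⟨v√M, f⟩. -/

import Mathlib

open MeasureTheory Real RealInnerProductSpace

noncomputable section

/-- `Ed d` is Euclidean space `ℝ^d`. -/
abbrev Ed (d : ℕ) := EuclideanSpace ℝ (Fin d)

/-- The global Maxwellian `M(v) = (2π)^{-d/2} exp(-|v|²/2)`. -/
def maxw (d : ℕ) (v : Ed d) : ℝ := (2 * π) ^ (-(d : ℝ) / 2) * Real.exp (-‖v‖ ^ 2 / 2)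

/-- `√M`. -/
def sqrtM (d : ℕ) (v : Ed d) : ℝ := Real.sqrt (maxw d v)

/-- macroscopic density `a(x) = ∫ √M f dv`. -/
def macroA (d : ℕ) (f : Ed d → Ed d → ℝ) (x : Ed d) : ℝ := ∫ v : Ed d, sqrtM d v * f x v

/-- macroscopic momentum `b(x) = ∫ v √M f dv`. -/
def macroB (d : ℕ) (f : Ed d → Ed d → ℝ) (x : Ed d) : Ed d :=
  ∫ v : Ed d, (sqrtM d v * f x v) • v

/-- local averaged velocity `u_F = b/(1+a)`. -/
def uF (d : ℕ) (f : Ed d → Ed d → ℝ) (x : Ed d) : Ed d :=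
  (1 + macroA d f x)⁻¹ • macroB d f x

/-- the projection `P f = (a + b·v)√M`. -/
def projP (d : ℕ) (f : Ed d → Ed d → ℝ) (x v : Ed d) : ℝ :=
  (macroA d f x + ⟪macroB d f x, v⟫) * sqrtM d v

/-- the microscopic part `{I - P} f`. -/
def IminusP (d : ℕ) (f : Ed d → Ed d → ℝ) : Ed d → Ed d → ℝ :=
  fun x v => f x v - projP d f x v

/-- Laplacian in the velocity variable. -/
def lapv (d : ℕ) (g : Ed d → ℝ) (v : Ed d) : ℝ :=
  ∑ i : Fin d,
    fderiv ℝ (fun w => fderiv ℝ g w (EuclideanSpace.single i 1)) v (EuclideanSpace.single i 1)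

/-- the linear Fokker–Planck operator `L g = Δ_v g + (1/4)(2d - |v|²) g`. -/
def fpL (d : ℕ) (g : Ed d → ℝ) (v : Ed d) : ℝ :=
  lapv d g v + (1 / 4) * (2 * (d : ℝ) - ‖v‖ ^ 2) * g v

/-- the nonlinear term `Γ = u·((1/2) v f + v √M)` evaluated pointwise. -/
def gammaTerm (d : ℕ) (u : Ed d) (fv : ℝ) (v : Ed d) : ℝ :=
  ⟪u, ((1 / 2) * fv) • v + sqrtM d v • v⟫

/-- `f` solves at time `t` the equation linearized along `fb`:
`∂_t f + v·∇_x f + u_{F̄}·∇_v f = L f + Γ(f̄,f)`. -/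
def SolvesLin (d : ℕ) (fb f : ℝ → Ed d → Ed d → ℝ) (t : ℝ) : Prop :=
  ∀ x v : Ed d,
    deriv (fun τ => f τ x v) t
      + fderiv ℝ (fun y => f t y v) x v
      + fderiv ℝ (fun w => f t x w) v (uF d (fb t) x)
    = fpL d (fun w => f t x w) v + gammaTerm d (uF d (fb t) x) (f t x v) v

/-- `f` solves the perturbed Vlasov–Fokker–Planck equation at time `t`. -/
def SolvesVFP (d : ℕ) (f : ℝ → Ed d → Ed d → ℝ) (t : ℝ) : Prop :=
  SolvesLin d f f t

/-- regularity part of being a classical solution on `[0,T]`. -/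
def ClassicalReg (d : ℕ) (f : ℝ → Ed d → Ed d → ℝ) (T : ℝ) : Prop :=
  ContinuousOn (fun p : ℝ × Ed d × Ed d => f p.1 p.2.1 p.2.2) {p | p.1 ∈ Set.Icc 0 T} ∧
  (∀ t ∈ Set.Icc (0 : ℝ) T, ContDiff ℝ 2 (fun p : Ed d × Ed d => f t p.1 p.2)) ∧
  (∀ x v : Ed d, ∀ t ∈ Set.Ioo (0 : ℝ) T, DifferentiableAt ℝ (fun τ => f τ x v) t)

/-- classical solution of the nonlinear equation on `[0,T]`. -/
def IsClassicalSolutionOn (d : ℕ) (f : ℝ → Ed d → Ed d → ℝ) (T : ℝ) : Prop :=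
  ClassicalReg d f T ∧ ∀ t ∈ Set.Ioo (0 : ℝ) T, SolvesVFP d f t

/-- regularity part of being a global classical solution. -/
def GlobalClassicalReg (d : ℕ) (f : ℝ → Ed d → Ed d → ℝ) : Prop :=
  ContinuousOn (fun p : ℝ × Ed d × Ed d => f p.1 p.2.1 p.2.2) {p | 0 ≤ p.1} ∧
  (∀ t : ℝ, 0 ≤ t → ContDiff ℝ 2 (fun p : Ed d × Ed d => f t p.1 p.2)) ∧
  (∀ x v : Ed d, ∀ t : ℝ, 0 < t → DifferentiableAt ℝ (fun τ => f τ x v) t)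

/-- global-in-time classical solution of the nonlinear equation. -/
def IsGlobalClassicalSolution (d : ℕ) (f : ℝ → Ed d → Ed d → ℝ) : Prop :=
  GlobalClassicalReg d f ∧ ∀ t : ℝ, 0 < t → SolvesVFP d f t

/-- squared Sobolev norm `‖g‖²_{H^s}` in the variables `(x,v)`. -/
def hsNormSq (d s : ℕ) (g : Ed d → Ed d → ℝ) : ℝ :=
  ∑ k ∈ Finset.range (s + 1),
    ∫ z : Ed d × Ed d, ‖iteratedFDeriv ℝ k (fun p : Ed d × Ed d => g p.1 p.2) z‖ ^ 2

/-- squared `L²_x` norm of the `k`-th spatial derivative of `g`. -/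
def xDerivL2Sq {X : Type*} [NormedAddCommGroup X] [NormedSpace ℝ X] (d : ℕ) (k : ℕ)
    (g : Ed d → X) : ℝ := ∫ x : Ed d, ‖iteratedFDeriv ℝ k g x‖ ^ 2

/-- `‖∇_x(a,b)‖²_{H^{s-1}}`. -/
def gradABNormSq (d s : ℕ) (g : Ed d → Ed d → ℝ) : ℝ :=
  ∑ k ∈ Finset.Icc 1 s, (xDerivL2Sq d k (macroA d g) + xDerivL2Sq d k (macroB d g))

/-- the mixed derivative `∇_x^k ∇_v^l g`. -/
def mixedDeriv (d k l : ℕ) (g : Ed d → Ed d → ℝ) (x v : Ed d) :=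
  iteratedFDeriv ℝ k (fun y => iteratedFDeriv ℝ l (fun w => g y w) v) x

/-- squared `L²_{x,v}` norm of `∇_x^k ∇_v^l g`. -/
def mixedL2Sq (d k l : ℕ) (g : Ed d → Ed d → ℝ) : ℝ :=
  ∫ x : Ed d, ∫ v : Ed d, ‖mixedDeriv d k l g x v‖ ^ 2

/-- squared weighted norm `‖∇_x^k ∇_v^l g‖²_μ`. -/
def mixedMuNormSq (d k l : ℕ) (g : Ed d → Ed d → ℝ) : ℝ :=
  ∫ x : Ed d, ∫ v : Ed d,
    (‖fderiv ℝ (fun w => mixedDeriv d k l g x w) v‖ ^ 2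
      + (1 + ‖v‖ ^ 2) * ‖mixedDeriv d k l g x v‖ ^ 2)

/-- `‖g‖²_{L²_v(H^s_x)}`. -/
def l2vHsSq (d s : ℕ) (g : Ed d → Ed d → ℝ) : ℝ :=
  ∑ k ∈ Finset.range (s + 1), mixedL2Sq d k 0 g

/-- `‖g‖²_{L²_v(L¹_x)}`. -/
def l2vL1Sq (d : ℕ) (g : Ed d → Ed d → ℝ) : ℝ :=
  ∫ v : Ed d, (∫ x : Ed d, |g x v|) ^ 2

/-- plain squared `L²_{x,v}` norm. -/
def l2Sq (d : ℕ) (g : Ed d → Ed d → ℝ) : ℝ :=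
  ∫ x : Ed d, ∫ v : Ed d, (g x v) ^ 2

/-- the moment functional `A_{ij}(g)(x) = ⟨(v_i v_j - 1)√M, g(x,·)⟩`. -/
def Aij (d : ℕ) (i j : Fin d) (g : Ed d → Ed d → ℝ) (x : Ed d) : ℝ :=
  ∫ v : Ed d, (v i * v j - 1) * sqrtM d v * g x v

/-- squared weighted norm `|g|²_μ = ∫ (|∇_v g|² + (1+|v|²)|g|²) dv` in velocity only. -/
def muNormSqV (d : ℕ) (g : Ed d → ℝ) : ℝ :=
  ∫ v : Ed d, (‖fderiv ℝ g v‖ ^ 2 + (1 + ‖v‖ ^ 2) * (g v) ^ 2)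

/-- `a^f = ⟨√M, f⟩`. -/
def aFv (d : ℕ) (g : Ed d → ℝ) : ℝ := ∫ v : Ed d, sqrtM d v * g v

/-- `b^f = ⟨v√M, f⟩`. -/
def bFv (d : ℕ) (g : Ed d → ℝ) : Ed d := ∫ v : Ed d, (sqrtM d v * g v) • v

/-- `{I - P} g` for a function of the velocity only, `P g = (a^g + b^g·v)√M`. -/
def IminusPv (d : ℕ) (g : Ed d → ℝ) (v : Ed d) : ℝ :=
  g v - (aFv d g + ⟪bFv d g, v⟫) * sqrtM d v

theorem gauss_decay (m : ℕ) (r : ℝ) (hr : 0 ≤ r) :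
    (1 + r) ^ m * Real.exp (-(1/4) * r ^ 2) ≤ Real.exp ((m : ℝ) ^ 2) := by
  have h1 : (1 + r) ^ m ≤ Real.exp (m * r) := by
    rw [Real.exp_nat_mul]
    apply pow_le_pow_left₀ (by linarith)
    linarith [Real.add_one_le_exp r]
  calc (1 + r) ^ m * Real.exp (-(1/4) * r ^ 2)
      ≤ Real.exp (m * r) * Real.exp (-(1/4) * r ^ 2) := by gcongr
    _ = Real.exp (m * r + -(1/4) * r ^ 2) := by rw [Real.exp_add]
    _ ≤ _ := by
        apply Real.exp_le_exp.2
        nlinarith [sq_nonneg (r / 2 - m)]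

theorem gauss_schwartz_aux (d : ℕ) (k n : ℕ) : ∃ C : ℝ, ∀ x : Ed d,
    ‖x‖ ^ k * ‖iteratedFDeriv ℝ n (fun v : Ed d => Real.exp (-(1/4) * ‖v‖ ^ 2)) x‖ ≤ C := by
  have ht : (fun v : Ed d => -(1/4 : ℝ) * ‖v‖ ^ 2).HasTemperateGrowth :=
    (Function.HasTemperateGrowth.const (-(1/4 : ℝ))).mul
      (Function.hasTemperateGrowth_norm_sq (H := Ed d))
  obtain ⟨l, C, hC, hb⟩ := ht.norm_iteratedFDeriv_le_uniform n
  refine ⟨n.factorial * (1 + C) ^ n * Real.exp (((k + l * n : ℕ) : ℝ) ^ 2), fun x => ?_⟩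
  set r := ‖x‖ with hr
  have hr0 : 0 ≤ r := norm_nonneg x
  have h1r : 1 ≤ (1 + r) ^ l := one_le_pow₀ (by linarith)
  have key := norm_iteratedFDeriv_comp_le (𝕜 := ℝ) (g := Real.exp)
    (f := fun v : Ed d => -(1/4 : ℝ) * ‖v‖ ^ 2) (n := n) (N := ⊤)
    Real.contDiff_exp (contDiff_const.mul (contDiff_norm_sq ℝ)) (by exact_mod_cast le_top) x (C := Real.exp (-(1/4) * r ^ 2))
    (D := (1 + C) * (1 + r) ^ l)
    (by
      intro i _
      rw [norm_iteratedFDeriv_eq_norm_iteratedDeriv]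
      simp [iteratedDeriv_eq_iterate, Real.iter_deriv_exp, ← hr])
    (by
      intro i hi hin
      refine (hb i hin x).trans ?_
      have h1 : 1 ≤ (1 + C) * (1 + r) ^ l := by nlinarith
      calc C * (1 + r) ^ l ≤ (1 + C) * (1 + r) ^ l := by nlinarith
        _ ≤ _ := le_self_pow₀ h1 (by omega))
  have h2 : r ^ k ≤ (1 + r) ^ k := pow_le_pow_left₀ hr0 (by linarith) k
  have h3 := gauss_decay (k + l * n) r hr0
  change r ^ k * ‖iteratedFDeriv ℝ n (Real.exp ∘ fun v : Ed d => -(1/4 : ℝ) * ‖v‖ ^ 2) x‖ ≤ _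
  calc _ ≤ (1 + r) ^ k * (n.factorial * Real.exp (-(1/4) * r ^ 2) * ((1 + C) * (1 + r) ^ l) ^ n) := by
        gcongr
    _ = n.factorial * (1 + C) ^ n * ((1 + r) ^ (k + l * n) * Real.exp (-(1/4) * r ^ 2)) := by
        rw [mul_pow, ← pow_mul, pow_add]; ring
    _ ≤ _ := by gcongr

/-- constant -/
def cM (d : ℕ) : ℝ := Real.sqrt ((2 * π) ^ (-(d : ℝ) / 2))

theorem sqrtM_eq (d : ℕ) (v : Ed d) : sqrtM d v = cM d * Real.exp (-(1/4) * ‖v‖ ^ 2) := by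
  unfold sqrtM maxw cM
  rw [Real.sqrt_mul (by positivity)]
  congr 1
  rw [Real.sqrt_eq_iff_mul_self_eq (by positivity) (by positivity), ← Real.exp_add]
  congr 1; ring

/-- the function `√M` as a Schwartz function -/
def phi (d : ℕ) : SchwartzMap (Ed d) ℝ :=
  cM d • { toFun := fun v : Ed d => Real.exp (-(1/4) * ‖v‖ ^ 2)
           smooth' := (contDiff_const.mul (contDiff_norm_sq ℝ)).exp
           decay' := gauss_schwartz_aux d }

theorem phi_apply (d : ℕ) (v : Ed d) : phi d v = sqrtM d v := by
  rw [sqrtM_eq]; rfl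

theorem phi_pos (d : ℕ) (v : Ed d) : 0 < phi d v := by
  rw [phi_apply]; unfold sqrtM maxw; positivity

theorem phi_sq (d : ℕ) (v : Ed d) : phi d v ^ 2 = maxw d v := by
  rw [phi_apply]; unfold sqrtM; rw [Real.sq_sqrt]; unfold maxw; positivity

open ProbabilityTheory in
theorem gauss_eq (d : ℕ) :
    (volume : Measure (Ed d)).withDensity (fun v => ENNReal.ofReal (maxw d v))
      = stdGaussian (Ed d) := by
  have hint : Integrable (maxw d) := by
    have := ((phi d).memLp 2).integrable_sq
    refine this.congr (Filter.Eventually.of_forall fun v => ?_)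
    simp [phi_sq]
  have hm0 : ∀ v, 0 ≤ maxw d v := fun v => by unfold maxw; positivity
  have hcont : Continuous (maxw d) := by unfold maxw; fun_prop
  have : IsFiniteMeasure ((volume : Measure (Ed d)).withDensity
      (fun v => ENNReal.ofReal (maxw d v))) := isFiniteMeasure_withDensity_ofReal hint.2
  apply Measure.ext_of_charFun
  ext t
  rw [charFun_stdGaussian, charFun_apply,
    integral_withDensity_eq_integral_toReal_smul (by fun_prop) (by simp)]
  have h := GaussianFourier.integral_cexp_neg_mul_sq_norm_add (V := Ed d) (b := 1/2) (by norm_num)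
    Complex.I t
  have h2 : ∀ v : Ed d, (ENNReal.ofReal (maxw d v)).toReal • Complex.exp (⟪v, t⟫ * Complex.I)
      = (((2 * π) ^ (-(d : ℝ) / 2) : ℝ) : ℂ) *
        Complex.exp (-(1/2) * ‖v‖ ^ 2 + Complex.I * ⟪t, v⟫) := by
    intro v
    rw [ENNReal.toReal_ofReal (hm0 v)]
    unfold maxw
    rw [Complex.real_smul, Complex.exp_add, real_inner_comm]
    push_cast
    rw [mul_assoc]
    congr 2
    · congr 1; ring
    · congr 1; ring
  simp_rw [h2]
  rw [integral_const_mul, h]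
  have h3 : (((2 * π) ^ (-(d : ℝ) / 2) : ℝ) : ℂ) * (π / (1/2)) ^ ((Module.finrank ℝ (Ed d) : ℂ) / 2) = 1 := by
    have : ((π : ℂ) / (1/2)) = ((2 * π : ℝ) : ℂ) := by push_cast; ring
    rw [this]
    have e2 : ((Module.finrank ℝ (Ed d) : ℂ) / 2) = (((d : ℝ) / 2 : ℝ) : ℂ) := by
      simp
    rw [e2, ← Complex.ofReal_cpow (by positivity), ← Complex.ofReal_mul, ← Real.rpow_add (by positivity)]
    simp [neg_div]
  rw [← mul_assoc, h3, one_mul]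
  congr 1
  simp
  ring
theorem cs_interval (u : ℝ → ℝ) (hu : Continuous u) (L : ℝ) (hL : 0 < L) :
    (∫ t in (0 : ℝ)..L, u t) ^ 2 ≤ L * ∫ t in (0 : ℝ)..L, u t ^ 2 := by
  set I := ∫ t in (0 : ℝ)..L, u t with hI
  have h0 : 0 ≤ ∫ t in (0 : ℝ)..L, (u t - I / L) ^ 2 :=
    intervalIntegral.integral_nonneg hL.le fun t _ => sq_nonneg _
  have h1 : ∫ t in (0 : ℝ)..L, (u t - I / L) ^ 2
      = (∫ t in (0 : ℝ)..L, u t ^ 2) - 2 * (I / L) * I + L * (I / L) ^ 2 := by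
    have : ∀ t, (u t - I / L) ^ 2 = u t ^ 2 - 2 * (I / L) * u t + (I / L) ^ 2 := fun t => by ring
    simp_rw [this]
    rw [intervalIntegral.integral_add, intervalIntegral.integral_sub,
      intervalIntegral.integral_const_mul, intervalIntegral.integral_const]
    · simp [hI]
    all_goals apply Continuous.intervalIntegrable; fun_prop
  rw [h1] at h0
  have h2 : L * (I / L) ^ 2 = I ^ 2 / L := by field_simp
  have h3 : 2 * (I / L) * I = 2 * (I ^ 2 / L) := by ring
  rw [h2, h3] at h0
  have h4 : I ^ 2 / L ≤ ∫ t in (0 : ℝ)..L, u t ^ 2 := by linarith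
  rw [div_le_iff₀ hL] at h4
  linarith

theorem path_bound {d : ℕ} (h : Ed d → ℝ) (hh : ContDiff ℝ 1 h) (z : Ed d × Ed d) :
    ENNReal.ofReal ((h z.1 - h z.2) ^ 2) ≤ ENNReal.ofReal (π / 2) *
      ∫⁻ θ in Set.Ioc (0 : ℝ) (π / 2),
        ENNReal.ofReal (‖fderiv ℝ h (ContinuousLinearMap.rotation θ z).1‖ ^ 2 *
          ‖(ContinuousLinearMap.rotation θ z).2‖ ^ 2) := by
  have hpi : 0 < π / 2 := by positivity
  have hc' : Continuous (fderiv ℝ h) := hh.continuous_fderiv (by norm_num)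
  have hrot : Continuous (fun θ : ℝ => ContinuousLinearMap.rotation θ z) := by
    simp only [ContinuousLinearMap.rotation_apply]; fun_prop
  set u : ℝ → ℝ := fun θ => fderiv ℝ h (ContinuousLinearMap.rotation θ z).1
    (ContinuousLinearMap.rotation θ z).2 with hu
  have huc : Continuous u := by
    exact (hc'.comp (continuous_fst.comp hrot)).clm_apply (continuous_snd.comp hrot)
  have hder : ∀ θ : ℝ, HasDerivAt (fun θ : ℝ => h (ContinuousLinearMap.rotation θ z).1) (u θ) θ := by
    intro θ
    have h1 : HasDerivAt (fun θ : ℝ => (ContinuousLinearMap.rotation θ z).1)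
        (ContinuousLinearMap.rotation θ z).2 θ := by
      simp only [ContinuousLinearMap.rotation_apply]
      exact ((Real.hasDerivAt_cos θ).smul_const z.1).add ((Real.hasDerivAt_sin θ).smul_const z.2)
    exact ((hh.differentiable (by norm_num)) _).hasFDerivAt.comp_hasDerivAt θ h1
  have hint : ∫ θ in (0 : ℝ)..(π / 2), u θ = h z.2 - h z.1 := by
    rw [intervalIntegral.integral_eq_sub_of_hasDerivAt (fun θ _ => hder θ)
      (huc.intervalIntegrable _ _)]
    simp [ContinuousLinearMap.rotation_apply]
  have hcs := cs_interval u huc (π / 2) hpi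
  rw [hint] at hcs
  set w : ℝ → ℝ := fun θ => ‖fderiv ℝ h (ContinuousLinearMap.rotation θ z).1‖ ^ 2 *
          ‖(ContinuousLinearMap.rotation θ z).2‖ ^ 2 with hw
  have hwc : Continuous w :=
    ((hc'.comp (continuous_fst.comp hrot)).norm.pow 2).mul ((continuous_snd.comp hrot).norm.pow 2)
  have huw : ∀ θ, u θ ^ 2 ≤ w θ := by
    intro θ
    have := (fderiv ℝ h (ContinuousLinearMap.rotation θ z).1).le_opNorm
      (ContinuousLinearMap.rotation θ z).2
    rw [hw]; simp only [hu]
    rw [← mul_pow, ← sq_abs, ← Real.norm_eq_abs]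
    gcongr
  have hle : ∫ θ in (0 : ℝ)..(π / 2), u θ ^ 2 ≤ ∫ θ in (0 : ℝ)..(π / 2), w θ :=
    intervalIntegral.integral_mono_on hpi.le ((huc.pow 2).intervalIntegrable _ _)
      (hwc.intervalIntegrable _ _) (fun θ _ => huw θ)
  rw [← ofReal_integral_eq_lintegral_ofReal
    ((intervalIntegrable_iff_integrableOn_Ioc_of_le hpi.le).1 (hwc.intervalIntegrable _ _))
    (Filter.Eventually.of_forall fun θ => by simp only [hw, Pi.zero_apply]; positivity),
    ← ENNReal.ofReal_mul hpi.le, ← intervalIntegral.integral_of_le hpi.le]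
  apply ENNReal.ofReal_le_ofReal
  calc (h z.1 - h z.2) ^ 2 = (h z.2 - h z.1) ^ 2 := by ring
    _ ≤ _ := hcs
    _ ≤ _ := by gcongr

open ProbabilityTheory in
theorem gauss_poincare (d : ℕ) : ∃ C : ℝ, 0 < C ∧ ∀ h : Ed d → ℝ, ContDiff ℝ 1 h →
    ∫⁻ z, ENNReal.ofReal ((h z.1 - h z.2) ^ 2) ∂((stdGaussian (Ed d)).prod (stdGaussian (Ed d)))
      ≤ ENNReal.ofReal C * ∫⁻ x, ENNReal.ofReal (‖fderiv ℝ h x‖ ^ 2) ∂(stdGaussian (Ed d)) := by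
  set γ := stdGaussian (Ed d) with hγ
  have hm : Integrable (fun y : Ed d => ‖y‖ ^ 2) γ := by
    have := (IsGaussian.memLp_two_id (μ := γ)).integrable_norm_pow (by norm_num)
    simpa using this
  refine ⟨(π / 2) * ((π / 2) * (∫ y, ‖y‖ ^ 2 ∂γ + 1)), ?_, ?_⟩
  · have : 0 ≤ ∫ y, ‖y‖ ^ 2 ∂γ := integral_nonneg fun y => by positivity
    positivity
  intro h hh
  have hc' : Continuous (fderiv ℝ h) := hh.continuous_fderiv (by norm_num)
  set G : Ed d × Ed d → ENNReal := fun z => ENNReal.ofReal (‖fderiv ℝ h z.1‖ ^ 2 * ‖z.2‖ ^ 2) with hG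
  have hGm : Measurable G := by
    apply Measurable.ennreal_ofReal
    apply Continuous.measurable
    exact ((hc'.comp continuous_fst).norm.pow 2).mul (continuous_snd.norm.pow 2)
  have hrot : Continuous (fun p : (Ed d × Ed d) × ℝ => ContinuousLinearMap.rotation p.2 p.1) := by
    simp only [ContinuousLinearMap.rotation_apply]; fun_prop
  calc ∫⁻ z, ENNReal.ofReal ((h z.1 - h z.2) ^ 2) ∂(γ.prod γ)
      ≤ ∫⁻ z, ENNReal.ofReal (π / 2) * (∫⁻ θ in Set.Ioc (0 : ℝ) (π / 2),
          G (ContinuousLinearMap.rotation θ z)) ∂(γ.prod γ) := lintegral_mono fun z => path_bound h hh z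
    _ = ENNReal.ofReal (π / 2) * ∫⁻ z, (∫⁻ θ in Set.Ioc (0 : ℝ) (π / 2),
          G (ContinuousLinearMap.rotation θ z)) ∂(γ.prod γ) := by
        rw [lintegral_const_mul' _ _ ENNReal.ofReal_ne_top]
    _ = ENNReal.ofReal (π / 2) * ∫⁻ θ in Set.Ioc (0 : ℝ) (π / 2), ∫⁻ z,
          G (ContinuousLinearMap.rotation θ z) ∂(γ.prod γ) := by
        rw [lintegral_lintegral_swap]
        exact (hGm.comp hrot.measurable).aemeasurable
    _ = ENNReal.ofReal (π / 2) * ∫⁻ θ in Set.Ioc (0 : ℝ) (π / 2), ∫⁻ z, G z ∂(γ.prod γ) := by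
        congr 1
        apply lintegral_congr
        intro θ
        have := IsGaussian.map_rotation_eq_self (μ := γ) (by simp [hγ]) θ
        conv_rhs => rw [← this]
        rw [lintegral_map hGm (by fun_prop)]
    _ = ENNReal.ofReal (π / 2) * (ENNReal.ofReal (π / 2) *
          ((∫⁻ x, ENNReal.ofReal (‖fderiv ℝ h x‖ ^ 2) ∂γ) * ENNReal.ofReal (∫ y, ‖y‖ ^ 2 ∂γ))) := by
        congr 1
        rw [lintegral_const, Measure.restrict_apply_univ, Real.volume_Ioc, sub_zero, mul_comm]
        congr 1
        simp only [hG]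
        rw [ofReal_integral_eq_lintegral_ofReal hm (Filter.Eventually.of_forall fun y => by positivity)]
        rw [← lintegral_prod_mul]
        · apply lintegral_congr; intro z
          rw [ENNReal.ofReal_mul (by positivity)]
        · exact (hc'.norm.pow 2).measurable.ennreal_ofReal.aemeasurable
        · fun_prop
    _ ≤ _ := by
        rw [ENNReal.ofReal_mul (by positivity), ENNReal.ofReal_mul (by positivity)]
        rw [mul_assoc, mul_assoc, mul_comm (∫⁻ x, ENNReal.ofReal (‖fderiv ℝ h x‖ ^ 2) ∂γ)]
        gcongr
        linarith
open scoped LineDeriv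

/-- partial derivative -/
def Dd {d : ℕ} (i : Fin d) (g : SchwartzMap (Ed d) ℝ) : SchwartzMap (Ed d) ℝ :=
  ∂_{(EuclideanSpace.single i (1 : ℝ) : Ed d)} g

/-- multiplication by a coordinate -/
def Xx {d : ℕ} (i : Fin d) (g : SchwartzMap (Ed d) ℝ) : SchwartzMap (Ed d) ℝ :=
  SchwartzMap.smulLeftCLM ℝ (fun v : Ed d => v i) g

/-- annihilation operator -/
def Aa {d : ℕ} (i : Fin d) (g : SchwartzMap (Ed d) ℝ) : SchwartzMap (Ed d) ℝ :=
  Dd i g + (1 / 2 : ℝ) • Xx i g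

theorem Dd_apply {d : ℕ} (i : Fin d) (g : SchwartzMap (Ed d) ℝ) (v : Ed d) :
    Dd i g v = fderiv ℝ g v (EuclideanSpace.single i 1) := by
  unfold Dd; rw [SchwartzMap.lineDerivOp_apply_eq_fderiv]

theorem coord_tg {d : ℕ} (i : Fin d) : (fun v : Ed d => v i).HasTemperateGrowth :=
  (EuclideanSpace.proj i : Ed d →L[ℝ] ℝ).hasTemperateGrowth

theorem Xx_apply {d : ℕ} (i : Fin d) (g : SchwartzMap (Ed d) ℝ) (v : Ed d) :
    Xx i g v = v i * g v := by
  unfold Xx; rw [SchwartzMap.smulLeftCLM_apply_apply (coord_tg i)]; rfl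

theorem Aa_apply {d : ℕ} (i : Fin d) (g : SchwartzMap (Ed d) ℝ) (v : Ed d) :
    Aa i g v = Dd i g v + 1 / 2 * (v i * g v) := by
  unfold Aa; simp [Xx_apply]

theorem int_mul {d : ℕ} (f g : SchwartzMap (Ed d) ℝ) : Integrable (fun v => f v * g v) :=
  (f.memLp 2).integrable_mul (g.memLp 2)

theorem ibp {d : ℕ} (i : Fin d) (f g : SchwartzMap (Ed d) ℝ) :
    ∫ v, f v * Dd i g v = - ∫ v, Dd i f v * g v :=
  SchwartzMap.integral_mul_lineDerivOp_right_eq_neg_left f g _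

theorem Dd_Xx {d : ℕ} (i j : Fin d) (g : SchwartzMap (Ed d) ℝ) (v : Ed d) :
    Dd i (Xx j g) v = (if i = j then 1 else 0) * g v + v j * Dd i g v := by
  rw [Dd_apply, Dd_apply]
  have h : HasFDerivAt (Xx j g) (v j • fderiv ℝ g v + g v • (EuclideanSpace.proj j : Ed d →L[ℝ] ℝ)) v := by
    have h1 := ((EuclideanSpace.proj j : Ed d →L[ℝ] ℝ).hasFDerivAt (x := v)).mul
      (g.differentiableAt (x := v)).hasFDerivAt
    refine h1.congr_of_eventuallyEq (Filter.Eventually.of_forall fun w => ?_)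
    simp [Xx_apply]
  rw [h.fderiv]
  by_cases hij : i = j
  · subst hij; simp; ring
  · simp [hij, Ne.symm hij]

theorem Dd_phi {d : ℕ} (i : Fin d) (v : Ed d) : Dd i (phi d) v = -(1/2) * (v i * phi d v) := by
  rw [Dd_apply]
  have h : HasFDerivAt (phi d) ((phi d v) • (-(1/4 : ℝ)) • (2 • innerSL ℝ v)) v := by
    have h1 := ((((hasStrictFDerivAt_norm_sq v).hasFDerivAt).const_mul (-(1/4 : ℝ))).exp).const_mul (cM d)
    have e1 : (⇑(phi d) : Ed d → ℝ) = fun y => cM d * Real.exp (-(1/4) * ‖y‖ ^ 2) := by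
      funext w; rw [phi_apply, sqrtM_eq]
    rw [← smul_assoc] at h1
    rw [e1]
    exact h1
  rw [h.fderiv]
  simp [EuclideanSpace.inner_single_right]
  ring

theorem Aa_phi {d : ℕ} (i : Fin d) (v : Ed d) : Aa i (phi d) v = 0 := by
  rw [Aa_apply, Dd_phi]; ring

theorem Aa_Xx_phi {d : ℕ} (i j : Fin d) (v : Ed d) :
    Aa i (Xx j (phi d)) v = (if i = j then 1 else 0) * phi d v := by
  rw [Aa_apply, Dd_Xx, Dd_phi, Xx_apply]; ring

theorem opnorm_sq {d : ℕ} (T : Ed d →L[ℝ] ℝ) :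
    ‖T‖ ^ 2 = ∑ i, (T (EuclideanSpace.single i 1)) ^ 2 := by
  rw [(EuclideanSpace.basisFun (Fin d) ℝ).norm_dual T]
  simp

open ProbabilityTheory in
theorem schwartz_poincare (d : ℕ) : ∃ C : ℝ, 0 < C ∧ ∀ g : SchwartzMap (Ed d) ℝ,
    ∫ v, phi d v * g v = 0 → ∫ v, g v ^ 2 ≤ C * ∑ i, ∫ v, Aa i g v ^ 2 := by
  obtain ⟨C, hC, hP⟩ := gauss_poincare d
  refine ⟨C, hC, fun g hg => ?_⟩
  set γ := stdGaussian (Ed d) with hγ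
  set h : Ed d → ℝ := fun v => g v / phi d v with hh
  have hpos := phi_pos d
  have hne : ∀ v, phi d v ≠ 0 := fun v => (hpos v).ne'
  have hdiff : ContDiff ℝ 1 h := ContDiff.div (g.smooth 1) ((phi d).smooth 1) hne
  have hcont : Continuous h := hdiff.continuous
  have hfd : ∀ v i, fderiv ℝ h v (EuclideanSpace.single i 1) = Aa i g v / phi d v := by
    intro v i
    have h1 := ((hdiff.differentiable (by norm_num)) v).hasFDerivAt.mul
      ((phi d).differentiableAt (x := v)).hasFDerivAt
    have h0 : h * ⇑(phi d) = ⇑g := by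
      funext w; have := hne w; simp only [hh, Pi.mul_apply]; field_simp
    rw [h0] at h1
    have e1 := Dd_apply i g v
    have e2 := Dd_apply i (phi d) v
    rw [Dd_phi] at e2
    rw [h1.fderiv] at e1
    simp only [smul_apply, add_apply, smul_eq_mul, ← e2] at e1
    have hn := hne v
    rw [Aa_apply, e1, eq_div_iff hn]
    simp only [hh]
    field_simp
    ring
  have hdens : ∀ v, maxw d v = phi d v ^ 2 := fun v => (phi_sq d v).symm
  have hmc : Continuous (maxw d) := by unfold maxw; fun_prop
  have hm0 : ∀ v, 0 ≤ maxw d v := fun v => by rw [hdens]; positivity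
  have hγ' : γ = (volume : Measure (Ed d)).withDensity (fun v => ENNReal.ofReal (maxw d v)) :=
    (gauss_eq d).symm
  have hI : ∀ k : Ed d → ℝ, ∫ v, k v ∂γ = ∫ v, phi d v ^ 2 * k v := by
    intro k
    rw [hγ', integral_withDensity_eq_integral_toReal_smul (by fun_prop) (by simp)]
    congr 1; ext v
    rw [ENNReal.toReal_ofReal (hm0 v), hdens]; rfl
  have hIi : ∀ k : Ed d → ℝ, Integrable (fun v => phi d v ^ 2 * k v) → Integrable k γ := by
    intro k hk
    rw [hγ', integrable_withDensity_iff_integrable_smul' (by fun_prop) (by simp)]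
    refine hk.congr (Filter.Eventually.of_forall fun v => ?_)
    simp only [ENNReal.toReal_ofReal (hm0 v)]; rw [hdens]; rfl
  have e1 : ∀ v, phi d v ^ 2 * h v = phi d v * g v := fun v => by
    have := hne v; simp only [hh]; field_simp
  have e2 : ∀ v, phi d v ^ 2 * h v ^ 2 = g v ^ 2 := fun v => by
    have := hne v; simp only [hh]; field_simp
  have e3 : ∀ v, phi d v ^ 2 * ‖fderiv ℝ h v‖ ^ 2 = ∑ i, Aa i g v ^ 2 := fun v => by
    have := hne v
    rw [opnorm_sq, Finset.mul_sum]
    refine Finset.sum_congr rfl fun i _ => ?_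
    rw [hfd]; field_simp
  have sqint : ∀ k : SchwartzMap (Ed d) ℝ, Integrable (fun v => k v ^ 2) := fun k => by
    simpa [sq] using int_mul k k
  have i1 : Integrable h γ := hIi _ (by simp_rw [e1]; exact int_mul _ _)
  have i2 : Integrable (fun v => h v ^ 2) γ := hIi _ (by simp_rw [e2]; exact sqint g)
  have i3 : Integrable (fun v => ‖fderiv ℝ h v‖ ^ 2) γ :=
    hIi _ (by simp_rw [e3]; exact integrable_finsetSum _ fun i _ => sqint _)
  have v1 : ∫ v, h v ∂γ = 0 := by rw [hI]; simp_rw [e1]; exact hg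
  have v2 : ∫ v, h v ^ 2 ∂γ = ∫ v, g v ^ 2 := by rw [hI]; simp_rw [e2]
  have v3 : ∫ v, ‖fderiv ℝ h v‖ ^ 2 ∂γ = ∑ i, ∫ v, Aa i g v ^ 2 := by
    rw [hI]; simp_rw [e3]; exact integral_finsetSum _ fun i _ => sqint _
  have key := hP h hdiff
  have j1 : Integrable (fun z : Ed d × Ed d => h z.1 ^ 2) (γ.prod γ) := i2.comp_fst γ
  have j2 : Integrable (fun z : Ed d × Ed d => h z.2 ^ 2) (γ.prod γ) := i2.comp_snd γ
  have j3 : Integrable (fun z : Ed d × Ed d => h z.1 * h z.2) (γ.prod γ) := i1.mul_prod i1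
  have ex : ∀ z : Ed d × Ed d, (h z.1 - h z.2) ^ 2 = h z.1 ^ 2 + h z.2 ^ 2 - 2 * (h z.1 * h z.2) :=
    fun z => by ring
  have j4 : Integrable (fun z : Ed d × Ed d => (h z.1 - h z.2) ^ 2) (γ.prod γ) := by
    simp_rw [ex]; exact (j1.add j2).sub (j3.const_mul 2)
  have w1 : ∫ z, h z.1 ^ 2 ∂(γ.prod γ) = ∫ v, g v ^ 2 := by
    rw [integral_fun_fst (μ := γ) (ν := γ) (fun v => h v ^ 2), v2]; simp
  have w2 : ∫ z, h z.2 ^ 2 ∂(γ.prod γ) = ∫ v, g v ^ 2 := by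
    rw [integral_fun_snd (μ := γ) (ν := γ) (fun v => h v ^ 2), v2]; simp
  have w3 : ∫ z, h z.1 * h z.2 ∂(γ.prod γ) = 0 := by
    rw [integral_prod_mul, v1, zero_mul]
  have w4 : ∫ z, (h z.1 - h z.2) ^ 2 ∂(γ.prod γ) = 2 * ∫ v, g v ^ 2 := by
    simp_rw [ex]
    rw [integral_sub (by exact j1.add j2) (j3.const_mul 2), integral_add j1 j2, integral_const_mul,
      w1, w2, w3]
    ring
  rw [← ofReal_integral_eq_lintegral_ofReal j4 (Filter.Eventually.of_forall fun z => by positivity),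
    ← ofReal_integral_eq_lintegral_ofReal i3 (Filter.Eventually.of_forall fun z => by positivity),
    ← ENNReal.ofReal_mul hC.le, w4, v3] at key
  have hnn : 0 ≤ ∑ i, ∫ v, Aa i g v ^ 2 :=
    Finset.sum_nonneg fun i _ => integral_nonneg fun v => by positivity
  rw [ENNReal.ofReal_le_ofReal_iff (by positivity)] at key
  have : 0 ≤ ∫ v, g v ^ 2 := integral_nonneg fun v => by positivity
  linarith
theorem sq_int {d : ℕ} (k : SchwartzMap (Ed d) ℝ) : Integrable (fun v => k v ^ 2) := by
  simpa [sq] using int_mul k k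

theorem ibp_X {d : ℕ} (i : Fin d) (g : SchwartzMap (Ed d) ℝ) :
    ∫ v, Xx i g v * Dd i g v = -(1/2) * ∫ v, g v ^ 2 := by
  have h := ibp i (Xx i g) g
  have h2 : ∫ v, Dd i (Xx i g) v * g v = (∫ v, g v ^ 2) + ∫ v, Xx i g v * Dd i g v := by
    rw [← integral_add (sq_int g) (int_mul _ _)]
    congr 1; ext v; rw [Dd_Xx, Xx_apply]; simp; ring
  rw [h2] at h
  linarith

theorem energy_i {d : ℕ} (i : Fin d) (g : SchwartzMap (Ed d) ℝ) :
    ∫ v, Aa i g v ^ 2 = (∫ v, Dd i g v ^ 2) - (1/2) * (∫ v, g v ^ 2) + (1/4) * ∫ v, Xx i g v ^ 2 := by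
  have h : ∀ v, Aa i g v ^ 2 = Dd i g v ^ 2 + Xx i g v * Dd i g v + (1/4) * Xx i g v ^ 2 := by
    intro v; rw [Aa_apply, Xx_apply]; ring
  simp_rw [h]
  rw [integral_add (by exact (sq_int _).add (int_mul _ _)) ((sq_int _).const_mul _),
    integral_add (sq_int _) (int_mul _ _), integral_const_mul, ibp_X]
  ring

theorem fpL_energy {d : ℕ} (g : SchwartzMap (Ed d) ℝ) :
    - (∫ v : Ed d, fpL d (⇑g) v * g v) = ∑ i, ∫ v, Aa i g v ^ 2 := by
  have h : ∀ v, fpL d (⇑g) v * g v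
      = ∑ i, (g v * Dd i (Dd i g) v + (1/2) * g v ^ 2 - (1/4) * Xx i g v ^ 2) := by
    intro v
    have e1 : lapv d (⇑g) v = ∑ i, Dd i (Dd i g) v := by
      unfold lapv
      refine Finset.sum_congr rfl fun i _ => ?_
      rw [Dd_apply]
      congr 2
    unfold fpL
    rw [e1, EuclideanSpace.real_norm_sq_eq]
    simp_rw [Xx_apply, mul_pow]
    rw [Finset.sum_sub_distrib, Finset.sum_add_distrib, ← Finset.mul_sum, ← Finset.mul_sum,
      ← Finset.mul_sum, ← Finset.sum_mul]
    simp
    ring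
  simp_rw [h]
  have hi : ∀ i : Fin d, Integrable (fun v => g v * Dd i (Dd i g) v + (1/2) * g v ^ 2 - (1/4) * Xx i g v ^ 2) :=
    fun i => ((int_mul _ _).add ((sq_int _).const_mul _)).sub ((sq_int _).const_mul _)
  rw [integral_finsetSum _ fun i _ => hi i, ← Finset.sum_neg_distrib]
  refine Finset.sum_congr rfl fun i _ => ?_
  rw [energy_i, integral_sub (by exact (int_mul _ _).add ((sq_int _).const_mul _)) ((sq_int _).const_mul _),
    integral_add (int_mul _ _) ((sq_int _).const_mul _), integral_const_mul, integral_const_mul, ibp]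
  simp_rw [sq]
  ring

theorem muNorm_eq {d : ℕ} (g : SchwartzMap (Ed d) ℝ) :
    muNormSqV d (⇑g) = (∑ i, ∫ v, Dd i g v ^ 2) + (∫ v, g v ^ 2) + ∑ i, ∫ v, Xx i g v ^ 2 := by
  unfold muNormSqV
  have h : ∀ v, ‖fderiv ℝ (⇑g) v‖ ^ 2 + (1 + ‖v‖ ^ 2) * (g v) ^ 2
      = (∑ i, Dd i g v ^ 2) + g v ^ 2 + ∑ i, Xx i g v ^ 2 := by
    intro v
    rw [opnorm_sq, EuclideanSpace.real_norm_sq_eq]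
    simp_rw [Xx_apply, mul_pow, Dd_apply]
    rw [← Finset.sum_mul]; ring
  simp_rw [h]
  have h1 : Integrable (fun v => ∑ i, Dd i g v ^ 2) := integrable_finsetSum _ fun i _ => sq_int _
  have h2 : Integrable (fun v => ∑ i, Xx i g v ^ 2) := integrable_finsetSum _ fun i _ => sq_int _
  rw [integral_add (by exact h1.add (sq_int g)) h2, integral_add h1 (sq_int g),
    integral_finsetSum _ fun i _ => sq_int _, integral_finsetSum _ fun i _ => sq_int _]

open ProbabilityTheory in
theorem phi_norm (d : ℕ) : ∫ v, phi d v ^ 2 = 1 := by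
  have h : (stdGaussian (Ed d)) Set.univ = 1 := measure_univ
  rw [← gauss_eq, withDensity_apply _ MeasurableSet.univ, Measure.restrict_univ] at h
  simp_rw [← phi_sq] at h
  rw [← ofReal_integral_eq_lintegral_ofReal (sq_int _)
    (Filter.Eventually.of_forall fun z => by positivity)] at h
  simpa using h

theorem bFv_apply {d : ℕ} (f : SchwartzMap (Ed d) ℝ) (i : Fin d) :
    bFv d (⇑f) i = ∫ v, phi d v * Xx i f v := by
  have hint : Integrable (fun v : Ed d => (sqrtM d v * f v) • v) := by
    have h := SchwartzMap.integrable_pow_mul (volume : Measure (Ed d))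
      (SchwartzMap.smulLeftCLM ℝ (⇑(phi d)) f) 1
    have hc : Continuous (fun v : Ed d => (sqrtM d v * f v) • v) := by
      simp_rw [← phi_apply]
      exact ((phi d).continuous.mul f.continuous).smul continuous_id
    rw [← integrable_norm_iff hc.aestronglyMeasurable]
    refine h.congr (Filter.Eventually.of_forall fun v => ?_)
    simp only [pow_one]
    rw [SchwartzMap.smulLeftCLM_apply_apply (phi d).hasTemperateGrowth, phi_apply,
      smul_eq_mul, norm_smul, mul_comm]
  unfold bFv
  have := (EuclideanSpace.proj i : Ed d →L[ℝ] ℝ).integral_comp_comm hint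
  refine Eq.trans this.symm ?_
  congr 1; ext v
  rw [Xx_apply, phi_apply]; simp; ring

theorem int_A_phi {d : ℕ} (f : SchwartzMap (Ed d) ℝ) (i : Fin d) :
    ∫ v, Aa i f v * phi d v = bFv d (⇑f) i := by
  rw [bFv_apply]
  have h : ∀ v, Aa i f v * phi d v = phi d v * Dd i f v + (1/2) * (phi d v * Xx i f v) := by
    intro v; rw [Aa_apply, Xx_apply]; ring
  simp_rw [h]
  rw [integral_add (int_mul _ _) ((int_mul _ _).const_mul _), integral_const_mul, ibp]
  have h2 : ∀ v, Dd i (phi d) v * f v = -(1/2) * (phi d v * Xx i f v) := by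
    intro v; rw [Dd_phi, Xx_apply]; ring
  simp_rw [h2]
  rw [integral_const_mul]; ring

/-- the microscopic part as a Schwartz function -/
def micro {d : ℕ} (f : SchwartzMap (Ed d) ℝ) : SchwartzMap (Ed d) ℝ :=
  f - (aFv d (⇑f)) • phi d - ∑ j, (bFv d (⇑f) j) • Xx j (phi d)

theorem micro_apply {d : ℕ} (f : SchwartzMap (Ed d) ℝ) (v : Ed d) :
    micro f v = f v - aFv d (⇑f) * phi d v - ∑ j, bFv d (⇑f) j * Xx j (phi d) v := by
  unfold micro
  simp

theorem micro_eq {d : ℕ} (f : SchwartzMap (Ed d) ℝ) : ⇑(micro f) = IminusPv d (⇑f) := by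
  funext v
  rw [micro_apply]
  unfold IminusPv
  rw [← phi_apply, PiLp.inner_apply, add_mul, Finset.sum_mul]
  simp_rw [Xx_apply]
  rw [sub_sub]
  congr 2
  refine Finset.sum_congr rfl fun j _ => ?_
  simp; ring

theorem Aa_micro {d : ℕ} (f : SchwartzMap (Ed d) ℝ) (i : Fin d) (v : Ed d) :
    Aa i (micro f) v = Aa i f v - bFv d (⇑f) i * phi d v := by
  have hl : Dd i (micro f) = Dd i f - (aFv d (⇑f)) • Dd i (phi d)
      - ∑ j, (bFv d (⇑f) j) • Dd i (Xx j (phi d)) := by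
    have hD : ∀ k : SchwartzMap (Ed d) ℝ, Dd i k = LineDeriv.lineDerivOpCLM ℝ
        (SchwartzMap (Ed d) ℝ) (EuclideanSpace.single i (1 : ℝ) : Ed d) k := fun k => rfl
    unfold micro
    simp only [hD, map_sub, map_sum, map_smul]
  have hp := Aa_phi i v
  have hx := fun j => Aa_Xx_phi i j v
  rw [Aa_apply, hl, micro_apply, Aa_apply]
  simp only [Aa_apply] at hp hx
  have : ∑ j, bFv d (⇑f) j * (Dd i (Xx j (phi d)) v + 1 / 2 * (v i * Xx j (phi d) v))
      = bFv d (⇑f) i * phi d v := by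
    simp_rw [hx]; simp
  rw [← this]
  simp only [mul_add, Finset.sum_add_distrib]
  have e : ∑ j, bFv d (⇑f) j * (1 / 2 * (v i * Xx j (phi d) v))
      = 1 / 2 * (v i * ∑ j, bFv d (⇑f) j * Xx j (phi d) v) := by
    rw [Finset.mul_sum, Finset.mul_sum]
    exact Finset.sum_congr rfl fun j _ => by ring
  rw [e]
  simp
  linear_combination (-aFv d (⇑f)) * hp

theorem int_phi_micro {d : ℕ} (f : SchwartzMap (Ed d) ℝ) : ∫ v, phi d v * micro f v = 0 := by
  have hx : ∀ j, ∫ v, phi d v * Xx j (phi d) v = 0 := by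
    intro j
    have h := ibp j (phi d) (phi d)
    have h1 : ∀ v, phi d v * Dd j (phi d) v = -(1/2) * (phi d v * Xx j (phi d) v) := by
      intro v; rw [Dd_phi, Xx_apply]
      ring
    have h2 : ∀ v, Dd j (phi d) v * phi d v = -(1/2) * (phi d v * Xx j (phi d) v) := by
      intro v; rw [mul_comm, h1]
    simp_rw [h1, h2] at h
    rw [integral_const_mul] at h
    linarith
  have h : ∀ v, phi d v * micro f v = phi d v * f v - aFv d (⇑f) * phi d v ^ 2
      - ∑ j, bFv d (⇑f) j * (phi d v * Xx j (phi d) v) := by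
    intro v
    rw [micro_apply, mul_sub, mul_sub, Finset.mul_sum]
    congr 1
    · ring
    · exact Finset.sum_congr rfl fun j _ => by ring
  simp_rw [h]
  rw [integral_sub (by exact (int_mul _ _).sub ((sq_int _).const_mul _))
    (integrable_finsetSum _ fun j _ => (int_mul _ _).const_mul _),
    integral_sub (int_mul _ _) ((sq_int _).const_mul _),
    integral_finsetSum _ fun j _ => (int_mul _ _).const_mul _, integral_const_mul, phi_norm]
  simp_rw [integral_const_mul, hx]
  have : aFv d (⇑f) = ∫ v, phi d v * f v := by unfold aFv; simp_rw [phi_apply]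
  rw [this]; simp

theorem energy_split {d : ℕ} (f : SchwartzMap (Ed d) ℝ) :
    ∑ i, ∫ v, Aa i f v ^ 2 = (∑ i, ∫ v, Aa i (micro f) v ^ 2) + ‖bFv d (⇑f)‖ ^ 2 := by
  rw [EuclideanSpace.real_norm_sq_eq, ← Finset.sum_add_distrib]
  refine Finset.sum_congr rfl fun i _ => ?_
  have h : ∀ v, Aa i (micro f) v ^ 2 = Aa i f v ^ 2 - 2 * bFv d (⇑f) i * (Aa i f v * phi d v)
      + bFv d (⇑f) i ^ 2 * phi d v ^ 2 := by
    intro v; rw [Aa_micro]; ring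
  simp_rw [h]
  rw [integral_add (by exact (sq_int _).sub ((int_mul _ _).const_mul _)) ((sq_int _).const_mul _),
    integral_sub (sq_int _) ((int_mul _ _).const_mul _), integral_const_mul, integral_const_mul,
    int_A_phi, phi_norm]
  ring

/-- Proposition 2.1 (ii), coercivity.

There exists `λ > 0` such that `-⟨L f, f⟩ ≥ λ |{I - P} f|²_μ + |b^f|²` for all suitable
(here: Schwartz) `f`, where `b^f = ⟨v√M, f⟩`. -/
theorem fokkerPlanck_coercivity (d : ℕ) (hd : 1 ≤ d) :
    ∃ lam > (0 : ℝ), ∀ f : SchwartzMap (Ed d) ℝ,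
      - (∫ v : Ed d, fpL d (⇑f) v * f v)
        ≥ lam * muNormSqV d (IminusPv d (⇑f)) + ‖bFv d (⇑f)‖ ^ 2 := by
  obtain ⟨C, hC, hP⟩ := schwartz_poincare d
  refine ⟨1 / (4 + 2 * d * C + C), by positivity, fun f => ?_⟩
  rw [fpL_energy, energy_split, ← micro_eq, muNorm_eq]
  set g := micro f
  have hN := hP g (int_phi_micro f)
  have hE : ∑ i, ∫ v, Aa i g v ^ 2 = (∑ i, ∫ v, Dd i g v ^ 2) - d / 2 * (∫ v, g v ^ 2)
      + (1/4) * ∑ i, ∫ v, Xx i g v ^ 2 := by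
    simp_rw [energy_i]
    rw [Finset.sum_add_distrib, Finset.sum_sub_distrib, ← Finset.mul_sum, ← Finset.mul_sum]
    simp; ring
  have hD0 : 0 ≤ ∑ i, ∫ v, Dd i g v ^ 2 :=
    Finset.sum_nonneg fun i _ => integral_nonneg fun v => by positivity
  set A := ∑ i, ∫ v, Aa i g v ^ 2
  set N := ∫ v, g v ^ 2
  set D := ∑ i, ∫ v, Dd i g v ^ 2
  set X := ∑ i, ∫ v, Xx i g v ^ 2
  have hd0 : (0 : ℝ) ≤ d := by positivity
  have hdN : (d : ℝ) * N ≤ d * (C * A) := mul_le_mul_of_nonneg_left hN hd0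
  have key : D + N + X ≤ (4 + 2 * d * C + C) * A := by nlinarith
  have : 1 / (4 + 2 * d * C + C) * (D + N + X) ≤ A := by
    rw [one_div, inv_mul_le_iff₀ (by positivity)]
    exact key
  linarith
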